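/- Let G be a finite simple graph and let v be a vertex of G of degree at most 3. If the graph G − v obtained from G by deleting v is (3,1)-decomposable, then G is (3,1)-decomposable. (This is the reducibility behind Lemma 2.2(1): a vertex-minimal graph admitting no (3,1)-decomposition has minimum degree at least 4.) -/

import Mathlib

open SimpleGraph

/-- A graph `H` is `d`-degenerate: every induced subgraph on a nonempty vertex set
has a vertex of degree at most `d` (within that induced subgraph). -/
def Degenerate {V : Type*} (d : ℕ) (H : SimpleGraph V) : Prop :=
  ∀ s : Set V, s.Nonempty → ∃ v ∈ s, (H.neighborSet v ∩ s).ncard ≤ d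

/-- The graph `H` has maximum degree at most `h`. -/
def MaxDegreeLE {V : Type*} (h : ℕ) (H : SimpleGraph V) : Prop :=
  ∀ v : V, (H.neighborSet v).ncard ≤ h

/-- A graph `G` is `(d,h)`-decomposable: its edge set is partitioned into the edge
sets of two spanning subgraphs `H₁` and `H₂`, where `H₁` is `d`-degenerate and
`H₂` has maximum degree at most `h`. -/
def Decomposable {V : Type*} (d h : ℕ) (G : SimpleGraph V) : Prop :=
  ∃ H₁ H₂ : SimpleGraph V, H₁ ⊔ H₂ = G ∧ Disjoint H₁ H₂ ∧
    Degenerate d H₁ ∧ MaxDegreeLE h H₂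

/-!
Put every edge at `v` into the degenerate part and leave the bounded-degree part as it is in
`G - v`. A vertex set containing `v` then has `v` itself as a vertex of small degree, and on a
vertex set avoiding `v` the degenerate part is the one given for `G - v`.
-/

section

variable {V W : Type*} {d h : ℕ}

lemma comap_sdiff_map (f : V ↪ W) (G : SimpleGraph W) (H : SimpleGraph V) :
    (G \ H.map f).comap f = G.comap f \ H := by
  ext a b
  simp only [comap_adj, sdiff_adj, map_adj_apply]

lemma MaxDegreeLE.map {H : SimpleGraph V} (hH : MaxDegreeLE h H) (f : V ↪ W) :
    MaxDegreeLE h (H.map f) := by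
  intro w
  obtain hempty | ⟨x, hx⟩ := ((H.map f).neighborSet w).eq_empty_or_nonempty
  · rw [hempty, Set.ncard_empty]
    exact h.zero_le
  · obtain ⟨u, -, -, rfl, -⟩ := (map_adj f H w x).mp hx
    rw [neighborSet_map, Set.ncard_image_of_injective _ f.injective]
    exact hH u

lemma Degenerate.exists_ncard_le_of_subset_range {f : V ↪ W} {H : SimpleGraph W}
    (hH : Degenerate d (H.comap f)) {s : Set W} (hs : s.Nonempty) (hsf : s ⊆ Set.range f) :
    ∃ w ∈ s, (H.neighborSet w ∩ s).ncard ≤ d := by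
  obtain ⟨u, hus, hu⟩ := hH (f ⁻¹' s) (hs.preimage' hsf)
  refine ⟨f u, hus, ?_⟩
  rwa [neighborSet_comap, ← Set.preimage_inter, Set.ncard_preimage_of_injective_subset_range
    f.injective (Set.inter_subset_right.trans hsf)] at hu

lemma Degenerate.of_induce_ne {H : SimpleGraph V} {v : V} (hfin : (H.neighborSet v).Finite)
    (hdeg : (H.neighborSet v).ncard ≤ d) (hH : Degenerate d (H.induce {u : V | u ≠ v})) :
    Degenerate d H := by
  intro s hs
  by_cases hv : v ∈ s
  · exact ⟨v, hv, (Set.ncard_le_ncard Set.inter_subset_left hfin).trans hdeg⟩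
  · refine hH.exists_ncard_le_of_subset_range (f := .subtype _) hs fun u hu => ?_
    exact ⟨⟨u, ne_of_mem_of_not_mem hu hv⟩, rfl⟩

theorem stmt_0_general (G : SimpleGraph V) (v : V) (hfin : (G.neighborSet v).Finite)
    (hdeg : (G.neighborSet v).ncard ≤ d)
    (hdec : Decomposable d h (G.induce {u : V | u ≠ v})) :
    Decomposable d h G := by
  obtain ⟨H₁, H₂, hsup, hdisj, hdegen, hmax⟩ := hdec
  have hle : H₂.spanningCoe ≤ G := (map_le_iff_le_comap _ _ _).mpr (le_sup_right.trans_eq hsup)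
  have hinduce : (G \ H₂.spanningCoe).induce {u : V | u ≠ v} = H₁ :=
    calc (G \ H₂.spanningCoe).induce {u : V | u ≠ v}
      _ = G.induce {u : V | u ≠ v} \ H₂ := comap_sdiff_map (.subtype _) G H₂
      _ = H₁ := by rw [← hsup, sup_sdiff_right_self, hdisj.sdiff_eq_left]
  have hnbr : (G \ H₂.spanningCoe).neighborSet v ⊆ G.neighborSet v :=
    neighborSet_mono sdiff_le v
  have hdegen_sdiff : Degenerate d (G \ H₂.spanningCoe) :=
    .of_induce_ne (hfin.subset hnbr) ((Set.ncard_le_ncard hnbr hfin).trans hdeg) (hinduce ▸ hdegen)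
  exact ⟨G \ H₂.spanningCoe, H₂.spanningCoe, sdiff_sup_cancel hle, disjoint_sdiff_self_left,
    hdegen_sdiff, hmax.map _⟩

end

theorem stmt_0 {V : Type*} [Fintype V] (G : SimpleGraph V) (v : V)
    (hdeg : (G.neighborSet v).ncard ≤ 3)
    (hdec : Decomposable 3 1 (G.induce {u : V | u ≠ v})) :
    Decomposable 3 1 G :=
  stmt_0_general G v (Set.toFinite _) hdeg hdec
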